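/- arXiv:2507.22389 — 3 statements merged into one kernel-verified Lean document; each statement's English description precedes it below -/
import Mathlib

section
/- Let g : ℝⁿ → ℝⁿ be continuously differentiable, let S ⊆ ℝⁿ be measurable, and let ν be a probability measure on ℝⁿ given by a density ρ with respect to Lebesgue measure, where ρ > 0 almost everywhere on S and ρ = 0 almost everywhere on the complement of S. Then for every measurable set F with F ⊆ g(S) (the image of S under g) and vol(F) > 0, one has ν(g⁻¹(F)) > 0; equivalently, the pushforward measure (g∗ν)(F) > 0. -/
open MeasureTheory ENNReal

/-!
A null preimage `g ⁻¹' F` for `ν` would make `g ⁻¹' F ∩ S` Lebesgue-null, since Lebesgue measure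
on `S` is absolutely continuous with respect to `ν`. But `g` maps `g ⁻¹' F ∩ S` onto `F ⊆ g '' S`,
so the Luzin N-property of `g` would make `F` Lebesgue-null.
-/

section LuzinN

variable {α β : Type*} {mα : MeasurableSpace α} {mβ : MeasurableSpace β}
  {μ ν : Measure α} {κ : Measure β} {g : α → β} {S : Set α} {F : Set β}

/-- The Luzin N-property of `g` on `S`: the map `g` sends `μ`-null subsets of `S` to `κ`-null sets.
The null sets need not be measurable. -/
def LuzinNOn (g : α → β) (S : Set α) (μ : Measure α) (κ : Measure β) : Prop :=
  ∀ ⦃t : Set α⦄, t ⊆ S → μ t = 0 → κ (g '' t) = 0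

theorem LuzinNOn.measure_preimage_pos (hg : LuzinNOn g S μ κ) (hν : μ.restrict S ≪ ν)
    (hFS : F ⊆ g '' S) (hF : 0 < κ F) : 0 < ν (g ⁻¹' F) := by
  contrapose! hF
  have preimage_null : μ (g ⁻¹' F ∩ S) = 0 :=
    Measure.measure_inter_eq_zero_of_restrict (hν (nonpos_iff_eq_zero.mp hF))
  have image_eq : g '' (g ⁻¹' F ∩ S) = F := by
    rw [Set.image_preimage_inter, Set.inter_eq_left.mpr hFS]
  exact (image_eq ▸ hg Set.inter_subset_right preimage_null).le

theorem restrict_absolutelyContinuous_withDensity {ρ : α → ℝ≥0∞} (hρ : AEMeasurable ρ μ)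
    (hρpos : ∀ᵐ x ∂μ, x ∈ S → 0 < ρ x) : μ.restrict S ≪ μ.withDensity ρ := by
  refine Measure.AbsolutelyContinuous.mk fun t ht ht_null => ?_
  have inter_ae_subset : (t ∩ S : Set α) ≤ᵐ[μ] ({x | ρ x ≠ 0} ∩ t : Set α) :=
    hρpos.mono fun x hx ⟨hxt, hxS⟩ => ⟨(hx hxS).ne', hxt⟩
  rw [Measure.restrict_apply ht]
  exact measure_mono_null_ae inter_ae_subset ((withDensity_apply_eq_zero' hρ).mp ht_null)

end LuzinN

section Haar

variable {E : Type*} [NormedAddCommGroup E] [NormedSpace ℝ E] [FiniteDimensional ℝ E]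
  [MeasurableSpace E] [BorelSpace E] {μ : Measure E} [μ.IsAddHaarMeasure]
  {g : E → E} {S F : Set E}

theorem luzinNOn_of_differentiableOn (hg : DifferentiableOn ℝ g S) : LuzinNOn g S μ μ :=
  fun _ ht h_null =>
    addHaar_image_eq_zero_of_differentiableOn_of_addHaar_eq_zero μ (hg.mono ht) h_null

theorem stmt_2_general (hg : DifferentiableOn ℝ g S) {ρ : E → ℝ≥0∞} (hρ : AEMeasurable ρ μ)
    (hρpos : ∀ᵐ x ∂μ, x ∈ S → 0 < ρ x) (hFS : F ⊆ g '' S) (hF : 0 < μ F) :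
    0 < μ.withDensity ρ (g ⁻¹' F) :=
  (luzinNOn_of_differentiableOn hg).measure_preimage_pos
    (restrict_absolutelyContinuous_withDensity hρ hρpos) hFS hF

end Haar

/-- If `g : ℝⁿ → ℝⁿ` is `C¹` and `ν` is a probability measure with density `ρ` w.r.t.
Lebesgue measure, where `ρ > 0` a.e. on `S` and `ρ = 0` a.e. off `S`, then every measurable
set `F ⊆ g '' S` of positive Lebesgue measure satisfies `ν (g ⁻¹' F) > 0`, i.e. the
pushforward measure of `F` is positive. -/
theorem stmt_2 (n : ℕ) (g : (Fin n → ℝ) → (Fin n → ℝ)) (hg : ContDiff ℝ 1 g)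
    (S : Set (Fin n → ℝ)) (hS : MeasurableSet S)
    (ρ : (Fin n → ℝ) → ℝ≥0∞) (hρ : Measurable ρ)
    (ν : Measure (Fin n → ℝ)) [IsProbabilityMeasure ν]
    (hν : ν = volume.withDensity ρ)
    (hρpos : ∀ᵐ x ∂volume, x ∈ S → 0 < ρ x)
    (hρzero : ∀ᵐ x ∂volume, x ∉ S → ρ x = 0)
    (F : Set (Fin n → ℝ)) (hF : MeasurableSet F) (hFS : F ⊆ g '' S)
    (hFvol : 0 < volume F) :
    0 < ν (g ⁻¹' F) := by
  subst hν
  exact stmt_2_general (hg.differentiable one_ne_zero).differentiableOn hρ.aemeasurable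
    hρpos hFS hFvol
end

section
/- (Equivalence of deterministic and probabilistic forward reachable sets, same-dimension form.) Let g : ℝⁿ → ℝⁿ be continuously differentiable, let S ⊆ ℝⁿ be measurable with g(S) measurable and vol(g(S)) < ∞, and let ν be a probability measure on ℝⁿ given by a density ρ with respect to Lebesgue measure, where ρ > 0 almost everywhere on S and ρ = 0 almost everywhere on the complement of S. Let μ = g∗ν be the pushforward of ν under g, and suppose ω* is a measurable set with μ(ω*) = 1 having minimal Lebesgue measure among all measurable sets of full μ-measure (for every measurable ω' with μ(ω') = 1, vol(ω*) ≤ vol(ω')). Then ω* equals the deterministic forward reachable set g(S) almost everywhere: vol((ω* \ g(S)) ∪ (g(S) \ ω*)) = 0. -/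
open MeasureTheory ENNReal

/-!
The reachable set `g '' S` carries the law `g∗ν`, so intersecting a minimal carrier `W` with it
cannot lose volume; as `g '' S` has finite volume, `W \ g '' S` is null. Conversely, since the
density is positive on `S`, the points of `S` that `g` sends outside `W` form a Lebesgue-null set,
and differentiable self-maps of a finite-dimensional space send null sets to null sets, so
`g '' S \ W` is null.
-/

/-- `W` has minimal volume, measured by `vol`, among the measurable sets carrying `μ`. With `vol`
the Lebesgue measure and `μ` the law of the state, this says that `W` is a probabilistic forward
reachable set. Carrying `μ` is encoded as `μ`-almost every point lying in the set, which makes sense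
for measures of any total mass. -/
structure IsMinimalCarrier {α : Type*} [MeasurableSpace α] (vol μ : Measure α) (W : Set α) :
    Prop where
  measurableSet : MeasurableSet W
  ae_mem : ∀ᵐ y ∂μ, y ∈ W
  measure_le : ∀ W', MeasurableSet W' → (∀ᵐ y ∂μ, y ∈ W') → vol W ≤ vol W'

section Carrier

variable {α : Type*} [MeasurableSpace α] {vol μ : Measure α} {W A : Set α}

theorem isMinimalCarrier_iff_prob_eq_one [IsProbabilityMeasure μ] :
    IsMinimalCarrier vol μ W ↔ MeasurableSet W ∧ μ W = 1 ∧
      ∀ W', MeasurableSet W' → μ W' = 1 → vol W ≤ vol W' := by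
  have carries_iff {B : Set α} (hB : MeasurableSet B) : (∀ᵐ y ∂μ, y ∈ B) ↔ μ B = 1 :=
    mem_ae_iff_prob_eq_one hB
  constructor
  · rintro ⟨hW, hμW, hmin⟩
    exact ⟨hW, (carries_iff hW).1 hμW, fun W' hW' h ↦ hmin W' hW' ((carries_iff hW').2 h)⟩
  · rintro ⟨hW, hμW, hmin⟩
    exact ⟨hW, (carries_iff hW).2 hμW, fun W' hW' h ↦ hmin W' hW' ((carries_iff hW').1 h)⟩

theorem IsMinimalCarrier.measure_sdiff_eq_zero (h : IsMinimalCarrier vol μ W)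
    (hA : MeasurableSet A) (hμA : ∀ᵐ y ∂μ, y ∈ A) (hfin : vol A ≠ ∞) : vol (W \ A) = 0 := by
  have hWA : vol W ≤ vol (W ∩ A) :=
    h.measure_le _ (h.measurableSet.inter hA) (h.ae_mem.and hμA)
  have hW_fin : vol W ≠ ∞ := ne_top_of_le_ne_top hfin (h.measure_le A hA hμA)
  have hinter : (W ∩ A : Set α) =ᵐ[vol] W :=
    ae_eq_of_subset_of_measure_ge Set.inter_subset_left hWA
      (h.measurableSet.inter hA).nullMeasurableSet hW_fin
  rw [← Set.sdiff_self_inter]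
  exact ae_le_set.1 hinter.symm.le

theorem IsMinimalCarrier.ae_eq (h : IsMinimalCarrier vol μ W) (hA : MeasurableSet A)
    (hμA : ∀ᵐ y ∂μ, y ∈ A) (hfin : vol A ≠ ∞) (hAW : vol (A \ W) = 0) : W =ᵐ[vol] A :=
  ae_eq_set.2 ⟨h.measure_sdiff_eq_zero hA hμA hfin, hAW⟩

end Carrier

section Density

variable {α : Type*} [MeasurableSpace α] {vol : Measure α} {ρ : α → ℝ≥0∞} {S : Set α}

theorem ae_withDensity_mem (hρ : AEMeasurable ρ vol) (hzero : ∀ᵐ x ∂vol, x ∉ S → ρ x = 0) :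
    ∀ᵐ x ∂vol.withDensity ρ, x ∈ S := by
  rw [ae_withDensity_iff' hρ]
  filter_upwards [hzero] with x hx
  exact not_imp_comm.1 hx

theorem ae_imp_of_ae_withDensity (hρ : AEMeasurable ρ vol) (hpos : ∀ᵐ x ∂vol, x ∈ S → 0 < ρ x)
    {p : α → Prop} (hp : ∀ᵐ x ∂vol.withDensity ρ, p x) : ∀ᵐ x ∂vol, x ∈ S → p x := by
  rw [ae_withDensity_iff' hρ] at hp
  filter_upwards [hp, hpos] with x hpx hρx hxS
  exact hpx (hρx hxS).ne'

end Density

section Haar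

variable {E : Type*} [NormedAddCommGroup E] [NormedSpace ℝ E] [FiniteDimensional ℝ E]
  [MeasurableSpace E] [BorelSpace E] {vol : Measure E} [vol.IsAddHaarMeasure]
  {g : E → E} {S W : Set E}

theorem addHaar_image_sdiff_eq_zero (hg : DifferentiableOn ℝ g S)
    (hgW : ∀ᵐ x ∂vol, x ∈ S → g x ∈ W) : vol (g '' S \ W) = 0 := by
  have hescape : vol (S ∩ g ⁻¹' Wᶜ) = 0 := by
    rw [measure_eq_zero_iff_ae_notMem]
    filter_upwards [hgW] with x hx hxS
    exact hxS.2 (hx hxS.1)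
  rw [Set.sdiff_eq, ← Set.image_inter_preimage]
  exact addHaar_image_eq_zero_of_differentiableOn_of_addHaar_eq_zero vol
    (hg.mono Set.inter_subset_left) hescape

theorem stmt_3_general {ρ : E → ℝ≥0∞} (hg : DifferentiableOn ℝ g S)
    (hgm : AEMeasurable g (vol.withDensity ρ)) (hgS : MeasurableSet (g '' S))
    (hgSfin : vol (g '' S) ≠ ∞) (hρ : AEMeasurable ρ vol)
    (hρpos : ∀ᵐ x ∂vol, x ∈ S → 0 < ρ x) (hρzero : ∀ᵐ x ∂vol, x ∉ S → ρ x = 0)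
    (hW : IsMinimalCarrier vol ((vol.withDensity ρ).map g) W) : W =ᵐ[vol] g '' S := by
  have hcarries : ∀ᵐ y ∂(vol.withDensity ρ).map g, y ∈ g '' S :=
    (ae_map_iff hgm hgS).2 <|
      (ae_withDensity_mem hρ hρzero).mono fun _ ↦ Set.mem_image_of_mem g
  have hgW : ∀ᵐ x ∂vol, x ∈ S → g x ∈ W :=
    ae_imp_of_ae_withDensity hρ hρpos (ae_of_ae_map hgm hW.ae_mem)
  exact hW.ae_eq hgS hcarries hgSfin (addHaar_image_sdiff_eq_zero hg hgW)

end Haar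

/-- Equivalence of deterministic and probabilistic forward reachable sets
(same-dimension form): a minimal-volume set `W` of full measure under the pushforward
`μ = g∗ν` coincides almost everywhere with the deterministic reachable set `g '' S`. -/
theorem stmt_3 (n : ℕ) (g : (Fin n → ℝ) → (Fin n → ℝ)) (hg : ContDiff ℝ 1 g)
    (S : Set (Fin n → ℝ)) (hS : MeasurableSet S)
    (hgS : MeasurableSet (g '' S)) (hgSfin : volume (g '' S) < ⊤)
    (ρ : (Fin n → ℝ) → ℝ≥0∞) (hρ : Measurable ρ)
    (ν : Measure (Fin n → ℝ)) [IsProbabilityMeasure ν]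
    (hν : ν = volume.withDensity ρ)
    (hρpos : ∀ᵐ x ∂volume, x ∈ S → 0 < ρ x)
    (hρzero : ∀ᵐ x ∂volume, x ∉ S → ρ x = 0)
    (μ : Measure (Fin n → ℝ)) (hμ : μ = Measure.map g ν)
    (W : Set (Fin n → ℝ)) (hW : MeasurableSet W) (hWfull : μ W = 1)
    (hWmin : ∀ W' : Set (Fin n → ℝ), MeasurableSet W' → μ W' = 1 → volume W ≤ volume W') :
    volume ((W \ g '' S) ∪ (g '' S \ W)) = 0 := by
  subst hν hμ
  have hgm : Measurable g := hg.continuous.measurable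
  have := Measure.isProbabilityMeasure_map (μ := volume.withDensity ρ) hgm.aemeasurable
  exact measure_symmDiff_eq_zero_iff.2 <|
    stmt_3_general (hg.differentiable one_ne_zero).differentiableOn hgm.aemeasurable hgS hgSfin.ne
      hρ.aemeasurable hρpos hρzero (isMinimalCarrier_iff_prob_eq_one.2 ⟨hW, hWfull, hWmin⟩)
end

section
/- (Convex optimization for FRS extraction.) Let K ∈ ℕ; for i = 1, …, K let x̄ᵢ ∈ ℝ², let Σᵢ be a symmetric positive-definite 2×2 real matrix with eigenvalues λᵢ₁, λᵢ₂, let Nᵢ be the Gaussian measure on ℝ² with density (2π)⁻¹ (det Σᵢ)^(−1/2) exp(−(x − x̄ᵢ)ᵀ Σᵢ⁻¹ (x − x̄ᵢ)/2) with respect to Lebesgue measure, and let Eᵢ(cᵢ) = {x ∈ ℝ² : (x − x̄ᵢ)ᵀ Σᵢ⁻¹ (x − x̄ᵢ) ≤ cᵢ}. Let p₁, …, p_K ≥ 0 with Σᵢ pᵢ = 1 and τ ∈ (0,1). Then a vector c ∈ ℝᴷ with cᵢ ≥ 0 for all i minimizes Σᵢ vol(Eᵢ(cᵢ)) subject to Σᵢ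 pᵢ Nᵢ(Eᵢ(cᵢ)) ≥ τ and cᵢ ≥ 0 for all i, if and only if c minimizes the linear objective Σᵢ π √(λᵢ₁ λᵢ₂) cᵢ subject to Σᵢ pᵢ (1 − exp(−cᵢ/2)) ≥ τ and cᵢ ≥ 0 for all i; moreover the latter problem is a convex program: its objective is linear and its feasible set {c ∈ ℝᴷ : cᵢ ≥ 0 for all i, Σᵢ pᵢ (1 − exp(−cᵢ/2)) ≥ τ} is convex. -/
open MeasureTheory Matrix

/-!
Factoring `S⁻¹ = Bᵀ B` turns a planar Mahalanobis sublevel set into a disc of squared radius `c`,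
so its volume `π √(det S) c` is linear in `c`. Hence Lebesgue measure pushes forward along the
squared Mahalanobis distance to a multiple of Lebesgue measure on the half-line. The Gaussian
density depends on the point only through this distance, whose law is therefore exponential with
rate `1 / 2`; its distribution function `1 - exp (-c / 2)` is concave on `c ≥ 0`. So the two
problems have the same feasible set, which is convex, and their objectives agree on it.
-/

open scoped ComplexOrder MatrixOrder Matrix.Norms.L2Operator in
lemma exists_eq_conjTranspose_mul_self {𝕜 n : Type*} [RCLike 𝕜] [Fintype n] {A : Matrix n n 𝕜}
    (hA : A.PosSemidef) : ∃ B : Matrix n n 𝕜, A = Bᴴ * B := by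
  classical exact CStarAlgebra.nonneg_iff_eq_star_mul_self.mp hA.nonneg

section MahalanobisDistance

variable {n : Type*} [Fintype n] [DecidableEq n]

/-- The squared Mahalanobis distance `(x - m)ᵀ S⁻¹ (x - m)` of `x` from the mean `m`
with respect to the covariance matrix `S`. -/
noncomputable def mahalanobisSq (S : Matrix n n ℝ) (m x : n → ℝ) : ℝ :=
  (x - m) ⬝ᵥ S⁻¹.mulVec (x - m)

/-- The Mahalanobis sublevel set `E(c)`; the bound `c` is on the squared distance. -/
def mahalanobisSublevel (S : Matrix n n ℝ) (m : n → ℝ) (c : ℝ) : Set (n → ℝ) :=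
  {x | mahalanobisSq S m x ≤ c}

lemma measurable_mahalanobisSq (S : Matrix n n ℝ) (m : n → ℝ) :
    Measurable (mahalanobisSq S m) := by
  unfold mahalanobisSq
  fun_prop

lemma mahalanobisSq_eq_dotProduct_self {S B : Matrix n n ℝ} (hB : S⁻¹ = Bᵀ * B) (m x : n → ℝ) :
    mahalanobisSq S m x = (B *ᵥ (x - m)) ⬝ᵥ (B *ᵥ (x - m)) := by
  rw [mahalanobisSq, hB, ← mulVec_mulVec, dotProduct_mulVec, vecMul_transpose]

lemma abs_inv_det_eq_sqrt_det {S B : Matrix n n ℝ} (hB : S⁻¹ = Bᵀ * B) :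
    |B.det⁻¹| = √S.det := by
  have hdet : S.det⁻¹ = B.det ^ 2 := by
    rw [← Ring.inverse_eq_inv', ← det_nonsing_inv, hB, det_mul, det_transpose, sq]
  rw [← inv_inv S.det, hdet, ← inv_pow, Real.sqrt_sq_eq_abs]

theorem volume_mahalanobisSublevel {S : Matrix n n ℝ} (hS : S.PosDef) (m : n → ℝ) (c : ℝ) :
    volume (mahalanobisSublevel S m c) =
      ENNReal.ofReal √S.det * volume {y : n → ℝ | y ⬝ᵥ y ≤ c} := by
  obtain ⟨B, hB⟩ := exists_eq_conjTranspose_mul_self hS.inv.posSemidef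
  rw [conjTranspose_eq_transpose_of_trivial] at hB
  have hB_det : LinearMap.det B.toLin' ≠ 0 := by
    intro h
    have := abs_inv_det_eq_sqrt_det hB
    rw [← LinearMap.det_toLin', h, _root_.inv_zero, abs_zero] at this
    exact (Real.sqrt_pos.2 hS.det_pos).ne this
  have h_preimage : mahalanobisSublevel S m c =
      (· + -m) ⁻¹' (B.toLin' ⁻¹' {y : n → ℝ | y ⬝ᵥ y ≤ c}) := by
    ext x
    simp only [mahalanobisSublevel, mahalanobisSq_eq_dotProduct_self hB, Set.mem_ofPred_eq,
      Set.mem_preimage, toLin'_apply, sub_eq_add_neg]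
  rw [h_preimage, measure_preimage_add_right, Measure.addHaar_preimage_linearMap _ hB_det,
    LinearMap.det_toLin', abs_inv_det_eq_sqrt_det hB]

end MahalanobisDistance

lemma volume_dotProduct_self_le {n : Type*} [Fintype n] {c : ℝ} (hc : 0 ≤ c) :
    volume {y : n → ℝ | y ⬝ᵥ y ≤ c} =
      volume (Metric.closedBall (0 : EuclideanSpace ℝ n) √c) := by
  rw [← (PiLp.volume_preserving_toLp n).measure_preimage
    Metric.isClosed_closedBall.measurableSet.nullMeasurableSet]
  congr 1
  ext y
  simp only [Set.mem_ofPred_eq, Set.mem_preimage, mem_closedBall_zero_iff,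
    EuclideanSpace.norm_eq, Real.sqrt_le_sqrt_iff hc, Real.norm_eq_abs, sq_abs, dotProduct, ← sq]

lemma volume_dotProduct_self_le_fin_two (c : ℝ) :
    volume {y : Fin 2 → ℝ | y ⬝ᵥ y ≤ c} = ENNReal.ofReal (Real.pi * c) := by
  rcases le_or_gt 0 c with hc | hc
  · rw [volume_dotProduct_self_le hc, EuclideanSpace.volume_closedBall_fin_two,
      ← ENNReal.ofReal_pow (Real.sqrt_nonneg c), Real.sq_sqrt hc, ← ENNReal.ofReal_mul hc, mul_comm]
  · have h_empty : {y : Fin 2 → ℝ | y ⬝ᵥ y ≤ c} = ∅ :=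
      Set.eq_empty_of_forall_notMem fun y hy =>
        (hy.trans_lt hc).not_ge (by simpa only [star_trivial] using dotProduct_star_self_nonneg y)
    rw [h_empty, measure_empty,
      ENNReal.ofReal_of_nonpos (mul_nonpos_of_nonneg_of_nonpos Real.pi_pos.le hc.le)]

theorem volume_mahalanobisSublevel_fin_two {S : Matrix (Fin 2) (Fin 2) ℝ} (hS : S.PosDef)
    (m : Fin 2 → ℝ) (c : ℝ) :
    volume (mahalanobisSublevel S m c) = ENNReal.ofReal (Real.pi * √S.det * c) := by
  rw [volume_mahalanobisSublevel hS, volume_dotProduct_self_le_fin_two,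
    ← ENNReal.ofReal_mul (Real.sqrt_nonneg _)]
  ring_nf

section Pushforward

variable {α β : Type*} [MeasurableSpace α] [MeasurableSpace β] {μ : Measure α}

lemma map_withDensity_comp {f : α → β} (hf : Measurable f) {g : β → ENNReal} (hg : Measurable g) :
    (μ.withDensity fun a => g (f a)).map f = (μ.map f).withDensity g := by
  ext s hs
  rw [Measure.map_apply hf hs, withDensity_apply _ (hf hs), withDensity_apply _ hs,
    setLIntegral_map hs hg hf]

lemma map_eq_smul_restrict_Ioi {q : α → ℝ} (hq : Measurable q) {k : ENNReal} (hk : k ≠ ⊤)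
    (hμ : ∀ t, μ {x | q x ≤ t} = k * ENNReal.ofReal t) :
    μ.map q = k • volume.restrict (Set.Ioi 0) := by
  have h_Iic (t : ℝ) : μ.map q (Set.Iic t) = k * ENNReal.ofReal t := by
    rw [Measure.map_apply hq measurableSet_Iic, ← hμ]
    rfl
  have h_fin (t : ℝ) : μ.map q (Set.Iic t) ≠ ⊤ := by
    rw [h_Iic]
    exact ENNReal.mul_ne_top hk ENNReal.ofReal_ne_top
  refine Measure.ext_of_Ioc' _ _ (fun a b _ => measure_ne_top_of_subset Set.Ioc_subset_Iic_self
    (h_fin b)) fun a b hab => ?_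
  calc μ.map q (Set.Ioc a b)
      = k * ENNReal.ofReal b - k * ENNReal.ofReal a := by
        rw [← Set.Iic_sdiff_Iic, measure_sdiff (Set.Iic_subset_Iic.2 hab.le)
          measurableSet_Iic.nullMeasurableSet (h_fin a), h_Iic, h_Iic]
    _ = k * ENNReal.ofReal (b - max a 0) := by
        rw [← ENNReal.mul_sub fun _ _ => hk, ENNReal.ofReal_sub _ (le_max_right a 0)]
        simp
    _ = (k • volume.restrict (Set.Ioi 0)) (Set.Ioc a b) := by
        rw [Measure.smul_apply, Measure.restrict_apply measurableSet_Ioc, Set.Ioc_inter_Ioi,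
          Real.volume_Ioc, smul_eq_mul]

end Pushforward

section PlanarGaussian

open ProbabilityTheory

/-- The Gaussian measure on the plane with mean `m` and covariance matrix `S`, given by its
density with respect to Lebesgue measure. -/
noncomputable def planarGaussian (S : Matrix (Fin 2) (Fin 2) ℝ) (m : Fin 2 → ℝ) :
    Measure (Fin 2 → ℝ) :=
  volume.withDensity fun x => ENNReal.ofReal
    ((2 * Real.pi)⁻¹ * (√S.det)⁻¹ * Real.exp (-(mahalanobisSq S m x) / 2))

variable {S : Matrix (Fin 2) (Fin 2) ℝ}

theorem map_mahalanobisSq_volume (hS : S.PosDef) (m : Fin 2 → ℝ) :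
    volume.map (mahalanobisSq S m) =
      ENNReal.ofReal (Real.pi * √S.det) • volume.restrict (Set.Ioi 0) := by
  refine map_eq_smul_restrict_Ioi (measurable_mahalanobisSq S m) ENNReal.ofReal_ne_top fun t => ?_
  rw [← ENNReal.ofReal_mul (by positivity)]
  exact volume_mahalanobisSublevel_fin_two hS m t

lemma withDensity_restrict_Ioi_eq_expMeasure (r : ℝ) :
    (volume.restrict (Set.Ioi 0)).withDensity
      (fun t => ENNReal.ofReal (r * Real.exp (-(r * t)))) = expMeasure r := by
  rw [Measure.restrict_congr_set Ioi_ae_eq_Ici, ← withDensity_indicator measurableSet_Ici]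
  change _ = volume.withDensity (exponentialPDF r)
  congr 1 with t
  by_cases ht : 0 ≤ t
  · rw [Set.indicator_of_mem (Set.mem_Ici.2 ht), exponentialPDF_of_nonneg ht]
  · rw [Set.indicator_of_notMem (mt Set.mem_Ici.1 ht), exponentialPDF_of_neg (not_le.1 ht)]

theorem map_mahalanobisSq_planarGaussian (hS : S.PosDef) (m : Fin 2 → ℝ) :
    (planarGaussian S m).map (mahalanobisSq S m) = expMeasure (1 / 2) := by
  have h_det : 0 < √S.det := Real.sqrt_pos.2 hS.det_pos
  let density (t : ℝ) : ENNReal :=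
    ENNReal.ofReal ((2 * Real.pi)⁻¹ * (√S.det)⁻¹ * Real.exp (-t / 2))
  have h_density : Measurable density := by fun_prop
  have h_scaled (t : ℝ) : ENNReal.ofReal (Real.pi * √S.det) * density t =
      ENNReal.ofReal (1 / 2 * Real.exp (-(1 / 2 * t))) := by
    rw [← ENNReal.ofReal_mul (by positivity)]
    congr 1
    field_simp
  calc (planarGaussian S m).map (mahalanobisSq S m)
      = (volume.map (mahalanobisSq S m)).withDensity density := by
        rw [← map_withDensity_comp (measurable_mahalanobisSq S m) h_density, planarGaussian]
    _ = (volume.restrict (Set.Ioi 0)).withDensity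
          (ENNReal.ofReal (Real.pi * √S.det) • density) := by
        rw [map_mahalanobisSq_volume hS, withDensity_smul_measure, ← withDensity_smul _ h_density]
    _ = expMeasure (1 / 2) := by
        rw [← withDensity_restrict_Ioi_eq_expMeasure]
        exact congrArg _ (funext h_scaled)

theorem planarGaussian_real_mahalanobisSublevel (hS : S.PosDef) (m : Fin 2 → ℝ) {c : ℝ}
    (hc : 0 ≤ c) :
    (planarGaussian S m).real (mahalanobisSublevel S m c) = 1 - Real.exp (-c / 2) := by
  have : IsProbabilityMeasure (expMeasure (1 / 2)) := isProbabilityMeasure_expMeasure one_half_pos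
  calc (planarGaussian S m).real (mahalanobisSublevel S m c)
      = ((planarGaussian S m).map (mahalanobisSq S m)).real (Set.Iic c) :=
        (map_measureReal_apply (measurable_mahalanobisSq S m) measurableSet_Iic).symm
    _ = cdf (expMeasure (1 / 2)) c := by rw [map_mahalanobisSq_planarGaussian hS, cdf_eq_real]
    _ = 1 - Real.exp (-c / 2) := by
        rw [cdf_expMeasure_eq one_half_pos, if_pos hc]
        ring_nf

end PlanarGaussian

section CoverageProgram

variable {ι : Type*} [Fintype ι]

/-- The feasible set of the coverage constraint: nonnegative levels `c` whose coverages `F i (c i)`,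
weighted by `p`, reach the threshold `τ` in total. -/
def coverageFeasible (F : ι → ℝ → ℝ) (p : ι → ℝ) (τ : ℝ) : Set (ι → ℝ) :=
  {c | (∀ i, 0 ≤ c i) ∧ τ ≤ ∑ i, p i * F i (c i)}

lemma coverageFeasible_congr {F G : ι → ℝ → ℝ} (hFG : ∀ i, Set.EqOn (F i) (G i) (Set.Ici 0))
    (p : ι → ℝ) (τ : ℝ) : coverageFeasible F p τ = coverageFeasible G p τ := by
  ext c
  refine and_congr_right fun hc => ?_
  rw [Finset.sum_congr rfl fun i _ => congrArg (p i * ·) (hFG i (hc i))]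

lemma convex_coverageFeasible {F : ι → ℝ → ℝ} (hF : ∀ i, ConcaveOn ℝ (Set.Ici 0) (F i))
    {p : ι → ℝ} (hp : ∀ i, 0 ≤ p i) (τ : ℝ) : Convex ℝ (coverageFeasible F p τ) := by
  have h_concave : ConcaveOn ℝ (Set.Ici 0) fun c : ι → ℝ => ∑ i, p i * F i (c i) := by
    refine ⟨convex_Ici 0, fun x hx y hy a b ha hb hab => ?_⟩
    simp only [smul_eq_mul, Finset.mul_sum, ← Finset.sum_add_distrib]
    refine Finset.sum_le_sum fun i _ => ?_
    calc a * (p i * F i (x i)) + b * (p i * F i (y i))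
        = p i * (a • F i (x i) + b • F i (y i)) := by simp only [smul_eq_mul]; ring
      _ ≤ p i * F i ((a • x + b • y) i) :=
        mul_le_mul_of_nonneg_left ((hF i).2 (hx i) (hy i) ha hb hab) (hp i)
  exact h_concave.convex_ge τ

/-- The feasible set of the FRS-extraction problem: each component of a Gaussian mixture is
evaluated on its own Mahalanobis sublevel set, and the masses are averaged with the weights `p`. -/
def gaussianFeasible (S : ι → Matrix (Fin 2) (Fin 2) ℝ) (m : ι → Fin 2 → ℝ) (p : ι → ℝ) (τ : ℝ) :
    Set (ι → ℝ) :=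
  coverageFeasible
    (fun i t => (planarGaussian (S i) (m i)).real (mahalanobisSublevel (S i) (m i) t)) p τ

/-- The feasible set of the reformulated problem, in which the coverage of each component is given
by the distribution function of the exponential law of rate `1 / 2`. -/
noncomputable def exponentialFeasible (p : ι → ℝ) (τ : ℝ) : Set (ι → ℝ) :=
  coverageFeasible (fun _ t => 1 - Real.exp (-t / 2)) p τ

lemma concaveOn_one_sub_exp_neg_div (r : ℝ) :
    ConcaveOn ℝ Set.univ fun t : ℝ => 1 - Real.exp (-t / r) := by
  have h_exp : ConvexOn ℝ Set.univ fun t : ℝ => Real.exp (-t / r) := by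
    have h_linear := convexOn_exp.comp_linearMap ((-r⁻¹) • LinearMap.id)
    refine h_linear.congr fun t _ => ?_
    simp [div_eq_inv_mul]
  exact (concaveOn_const 1 convex_univ).sub h_exp

theorem convex_exponentialFeasible {p : ι → ℝ} (hp : ∀ i, 0 ≤ p i) (τ : ℝ) :
    Convex ℝ (exponentialFeasible p τ) :=
  convex_coverageFeasible
    (fun _ => (concaveOn_one_sub_exp_neg_div 2).subset (Set.subset_univ _) (convex_Ici 0)) hp τ

lemma isLinearMap_sum_mul (w : ι → ℝ) : IsLinearMap ℝ fun c : ι → ℝ => ∑ i, w i * c i :=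
  (dotProductBilin ℝ ℝ w).isLinear

variable {S : ι → Matrix (Fin 2) (Fin 2) ℝ}

lemma gaussianFeasible_eq_exponentialFeasible (hS : ∀ i, (S i).PosDef) (m : ι → Fin 2 → ℝ)
    (p : ι → ℝ) (τ : ℝ) : gaussianFeasible S m p τ = exponentialFeasible p τ :=
  coverageFeasible_congr
    (fun i _ ht => planarGaussian_real_mahalanobisSublevel (hS i) (m i) ht) p τ

lemma sum_volume_mahalanobisSublevel (hS : ∀ i, (S i).PosDef) (m : ι → Fin 2 → ℝ) {c : ι → ℝ}
    (hc : ∀ i, 0 ≤ c i) :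
    ∑ i, volume (mahalanobisSublevel (S i) (m i) (c i)) =
      ENNReal.ofReal (∑ i, Real.pi * √(S i).det * c i) := by
  rw [ENNReal.ofReal_sum_of_nonneg fun i _ => mul_nonneg (by positivity) (hc i)]
  exact Finset.sum_congr rfl fun i _ => volume_mahalanobisSublevel_fin_two (hS i) (m i) (c i)

lemma sum_volume_mahalanobisSublevel_le_iff (hS : ∀ i, (S i).PosDef) (m : ι → Fin 2 → ℝ)
    {c d : ι → ℝ} (hc : ∀ i, 0 ≤ c i) (hd : ∀ i, 0 ≤ d i) :
    ∑ i, volume (mahalanobisSublevel (S i) (m i) (c i)) ≤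
        ∑ i, volume (mahalanobisSublevel (S i) (m i) (d i)) ↔
      ∑ i, Real.pi * √(S i).det * c i ≤ ∑ i, Real.pi * √(S i).det * d i := by
  rw [sum_volume_mahalanobisSublevel hS m hc, sum_volume_mahalanobisSublevel hS m hd,
    ENNReal.ofReal_le_ofReal_iff
      (Finset.sum_nonneg fun i _ => mul_nonneg (by positivity) (hd i))]

theorem isMinOn_sum_volume_mahalanobisSublevel_iff (hS : ∀ i, (S i).PosDef)
    (m : ι → Fin 2 → ℝ) {s : Set (ι → ℝ)} (hs : ∀ d ∈ s, ∀ i, 0 ≤ d i) {c : ι → ℝ} (hc : c ∈ s) :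
    IsMinOn (fun d => ∑ i, volume (mahalanobisSublevel (S i) (m i) (d i))) s c ↔
      IsMinOn (fun d => ∑ i, Real.pi * √(S i).det * d i) s c := by
  simp only [isMinOn_iff]
  exact forall₂_congr fun d hd => sum_volume_mahalanobisSublevel_le_iff hS m (hs c hc) (hs d hd)

theorem isMinOn_gaussianFeasible_iff_isMinOn_exponentialFeasible (hS : ∀ i, (S i).PosDef)
    (m : ι → Fin 2 → ℝ) (p : ι → ℝ) (τ : ℝ) (c : ι → ℝ) :
    (c ∈ gaussianFeasible S m p τ ∧
        IsMinOn (fun d => ∑ i, volume (mahalanobisSublevel (S i) (m i) (d i)))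
          (gaussianFeasible S m p τ) c) ↔
      (c ∈ exponentialFeasible p τ ∧
        IsMinOn (fun d => ∑ i, Real.pi * √(S i).det * d i) (exponentialFeasible p τ) c) := by
  rw [gaussianFeasible_eq_exponentialFeasible hS]
  exact and_congr_right fun hc =>
    isMinOn_sum_volume_mahalanobisSublevel_iff hS m (fun _ hd => hd.1) hc

end CoverageProgram

lemma eigenvalues_zero_mul_eigenvalues_one {A : Matrix (Fin 2) (Fin 2) ℝ} (hA : A.IsHermitian) :
    hA.eigenvalues 0 * hA.eigenvalues 1 = A.det := by
  simp [hA.det_eq_prod_eigenvalues, Fin.prod_univ_two]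

/-- Convex optimization for FRS extraction: `c` minimizes the total volume of the
Mahalanobis sublevel sets subject to the GMM coverage constraint iff it minimizes the
linear objective `Σᵢ π √(λᵢ₁ λᵢ₂) cᵢ` subject to `Σᵢ pᵢ (1 − exp(−cᵢ/2)) ≥ τ` and
`cᵢ ≥ 0`; moreover, the latter problem has a linear objective and a convex feasible set. -/
theorem stmt_8 (K : ℕ) (xbar : Fin K → (Fin 2 → ℝ)) (S : Fin K → Matrix (Fin 2) (Fin 2) ℝ)
    (hS : ∀ i, (S i).PosDef)
    (N : Fin K → Measure (Fin 2 → ℝ))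
    (hN : ∀ i, N i = volume.withDensity (fun x => ENNReal.ofReal
      ((2 * Real.pi)⁻¹ * (Real.sqrt (S i).det)⁻¹ *
        Real.exp (-((x - xbar i) ⬝ᵥ (S i)⁻¹.mulVec (x - xbar i)) / 2))))
    (E : Fin K → ℝ → Set (Fin 2 → ℝ))
    (hE : ∀ i c, E i c = {x : Fin 2 → ℝ | (x - xbar i) ⬝ᵥ (S i)⁻¹.mulVec (x - xbar i) ≤ c})
    (p : Fin K → ℝ) (hp : ∀ i, 0 ≤ p i) (hp1 : ∑ i, p i = 1)
    (τ : ℝ) (hτ : τ ∈ Set.Ioo (0 : ℝ) 1)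
    (c : Fin K → ℝ) :
    (((∀ i, 0 ≤ c i) ∧ τ ≤ ∑ i, p i * ((N i) (E i (c i))).toReal ∧
        ∀ c' : Fin K → ℝ,
          ((∀ i, 0 ≤ c' i) ∧ τ ≤ ∑ i, p i * ((N i) (E i (c' i))).toReal) →
            ∑ i, volume (E i (c i)) ≤ ∑ i, volume (E i (c' i))) ↔
      ((∀ i, 0 ≤ c i) ∧ τ ≤ ∑ i, p i * (1 - Real.exp (-(c i) / 2)) ∧
        ∀ c' : Fin K → ℝ,
          ((∀ i, 0 ≤ c' i) ∧ τ ≤ ∑ i, p i * (1 - Real.exp (-(c' i) / 2))) →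
            ∑ i, Real.pi *
                Real.sqrt ((hS i).isHermitian.eigenvalues 0 * (hS i).isHermitian.eigenvalues 1) *
                  c i ≤
              ∑ i, Real.pi *
                Real.sqrt ((hS i).isHermitian.eigenvalues 0 * (hS i).isHermitian.eigenvalues 1) *
                  c' i)) ∧
    IsLinearMap ℝ (fun c : Fin K → ℝ =>
      ∑ i, Real.pi *
        Real.sqrt ((hS i).isHermitian.eigenvalues 0 * (hS i).isHermitian.eigenvalues 1) * c i) ∧
    Convex ℝ {c : Fin K → ℝ |
      (∀ i, 0 ≤ c i) ∧ τ ≤ ∑ i, p i * (1 - Real.exp (-(c i) / 2))} := by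
  obtain rfl : N = fun i => planarGaussian (S i) (xbar i) := funext hN
  obtain rfl : E = fun i => mahalanobisSublevel (S i) (xbar i) := funext₂ hE
  simp only [eigenvalues_zero_mul_eigenvalues_one]
  refine ⟨?_, isLinearMap_sum_mul _, convex_exponentialFeasible hp τ⟩
  rw [← and_assoc, ← and_assoc]
  exact isMinOn_gaussianFeasible_iff_isMinOn_exponentialFeasible hS xbar p τ c
end
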